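/- Every quaternion matrix Q ∈ ℍ^{m×n} admits a singular value decomposition: there exist unitary quaternion matrices U ∈ ℍ^{m×m} and V ∈ ℍ^{n×n} and real numbers σ₁ ≥ σ₂ ≥ ⋯ ≥ σ_ℓ ≥ 0 with ℓ = min(m,n) such that Q = U Σ V^H, where Σ ∈ ℝ^{m×n} is the rectangular diagonal matrix with diagonal entries σ₁,…,σ_ℓ. -/

import Mathlib

open Quaternion Matrix

/-- Real part of the trace of a quaternion matrix. -/
def qReTr {k : ℕ} (M : Matrix (Fin k) (Fin k) (Quaternion ℝ)) : ℝ := ∑ i, (M i i).re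

lemma q_re_sum {ι : Type*} (s : Finset ι) (f : ι → Quaternion ℝ) :
    (∑ i ∈ s, f i).re = ∑ i ∈ s, (f i).re := by
  classical
  induction s using Finset.induction_on with
  | empty => simp
  | insert a s ha ih => simp [Finset.sum_insert ha, ih]

lemma qReTr_mul {k l : ℕ} (M : Matrix (Fin k) (Fin l) (Quaternion ℝ))
    (N : Matrix (Fin l) (Fin k) (Quaternion ℝ)) :
    qReTr (M * N) = ∑ i, ∑ j, (M i j * N j i).re := by
  simp [qReTr, Matrix.mul_apply, q_re_sum]

lemma qReTr_mul_comm {k l : ℕ} (M : Matrix (Fin k) (Fin l) (Quaternion ℝ))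
    (N : Matrix (Fin l) (Fin k) (Quaternion ℝ)) :
    qReTr (M * N) = qReTr (N * M) := by
  rw [qReTr_mul, qReTr_mul, Finset.sum_comm]
  refine Finset.sum_congr rfl fun i _ => Finset.sum_congr rfl fun j _ => ?_
  simp only [Quaternion.re_mul]
  ring

lemma qReTr_conjTranspose {k : ℕ} (M : Matrix (Fin k) (Fin k) (Quaternion ℝ)) :
    qReTr Mᴴ = qReTr M := by
  simp [qReTr, Matrix.conjTranspose_apply]

lemma qReTr_sub {k : ℕ} (M N : Matrix (Fin k) (Fin k) (Quaternion ℝ)) :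
    qReTr (M - N) = qReTr M - qReTr N := by
  simp [qReTr]

lemma qReTr_neg {k : ℕ} (M : Matrix (Fin k) (Fin k) (Quaternion ℝ)) :
    qReTr (-M) = - qReTr M := by
  simp [qReTr]

lemma q_re_star_mul_self (a : Quaternion ℝ) : (star a * a).re = ‖a‖ ^ 2 := by
  rw [Quaternion.star_mul_self, Quaternion.re_coe, Quaternion.normSq_eq_norm_mul_self, sq]

lemma eq_zero_of_qReTr {k l : ℕ} (M : Matrix (Fin k) (Fin l) (Quaternion ℝ))
    (h : qReTr (Mᴴ * M) = 0) : M = 0 := by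
  rw [qReTr_mul] at h
  simp only [Matrix.conjTranspose_apply, q_re_star_mul_self] at h
  rw [Finset.sum_eq_zero_iff_of_nonneg (fun i _ => Finset.sum_nonneg fun j _ => by positivity)] at h
  ext1 i j
  have h1 := h j (Finset.mem_univ _)
  rw [Finset.sum_eq_zero_iff_of_nonneg (fun j _ => by positivity)] at h1
  simpa using h1 i (Finset.mem_univ _)

section deriv
attribute [local instance] Matrix.linftyOpNormedRing Matrix.linftyOpNormedAlgebra

lemma qReTr_skew {k : ℕ} (M K : Matrix (Fin k) (Fin k) (Quaternion ℝ)) (hK : Kᴴ = -K)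
    (h : ∀ G : Matrix (Fin k) (Fin k) (Quaternion ℝ), Gᴴ * G = 1 → qReTr (M * G) ≤ qReTr M) :
    qReTr (M * K) = 0 := by
  let L : Matrix (Fin k) (Fin k) (Quaternion ℝ) →ₗ[ℝ] ℝ :=
    { toFun := fun X => qReTr (M * X)
      map_add' := fun X Y => by
        simp [qReTr, Matrix.mul_add, Finset.sum_add_distrib]
      map_smul' := fun r X => by
        simp [qReTr, Finset.mul_sum] }
  let L' := LinearMap.toContinuousLinearMap L
  have hd : HasDerivAt (fun t : ℝ => L' (NormedSpace.exp (t • K)))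
      (L' (NormedSpace.exp ((0:ℝ) • K) * K)) 0 :=
    L'.hasFDerivAt.comp_hasDerivAt (0:ℝ) (hasDerivAt_exp_smul_const K (0:ℝ))
  have hmax : IsLocalMax (fun t : ℝ => L' (NormedSpace.exp (t • K))) 0 := by
    refine Filter.Eventually.of_forall fun t => ?_
    have hu : (NormedSpace.exp (t • K))ᴴ * NormedSpace.exp (t • K) = 1 := by
      let _ : NormedAlgebra ℚ (Quaternion ℝ) := NormedAlgebra.restrictScalars ℚ ℝ (Quaternion ℝ)
      have hs : (t • K)ᴴ = -(t • K) := by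
        rw [← smul_neg, ← hK]
        ext1 i j
        simp [Matrix.conjTranspose_apply, Quaternion.star_smul]
      rw [← Matrix.exp_conjTranspose, hs,
        ← Matrix.exp_add_of_commute _ _ ((Commute.refl (t • K)).neg_left)]
      simp
    have h3 := h _ hu
    change qReTr (M * NormedSpace.exp (t • K)) ≤ qReTr (M * NormedSpace.exp ((0:ℝ) • K))
    simpa using h3
  have h4 := hmax.hasDerivAt_eq_zero hd
  change qReTr (M * (NormedSpace.exp ((0:ℝ) • K) * K)) = 0 at h4
  simpa using h4

end deriv

lemma hermitian_of_max {k : ℕ} (M : Matrix (Fin k) (Fin k) (Quaternion ℝ))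
    (h : ∀ G : Matrix (Fin k) (Fin k) (Quaternion ℝ), Gᴴ * G = 1 → qReTr (M * G) ≤ qReTr M) :
    Mᴴ = M := by
  have hK : (Mᴴ - M)ᴴ = -(Mᴴ - M) := by simp
  have h0 := qReTr_skew M (Mᴴ - M) hK h
  have h1 : qReTr (Mᴴ * (Mᴴ - M)) = 0 := by
    rw [← qReTr_conjTranspose, Matrix.conjTranspose_mul, hK, Matrix.conjTranspose_conjTranspose,
      Matrix.neg_mul, qReTr_neg, qReTr_mul_comm, h0, neg_zero]
  refine sub_eq_zero.mp (eq_zero_of_qReTr _ ?_)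
  rw [hK, Matrix.neg_mul, Matrix.sub_mul, qReTr_neg, qReTr_sub, h0, h1]
  simp

lemma diag_nonneg_of_max {k : ℕ} (M : Matrix (Fin k) (Fin k) (Quaternion ℝ))
    (h : ∀ G : Matrix (Fin k) (Fin k) (Quaternion ℝ), Gᴴ * G = 1 → qReTr (M * G) ≤ qReTr M)
    (i : Fin k) : 0 ≤ (M i i).re := by
  have := h (Matrix.diagonal fun j => if j = i then -1 else 1) (by
    rw [Matrix.diagonal_conjTranspose, Matrix.diagonal_mul_diagonal, ← Matrix.diagonal_one]
    congr 1
    ext1 j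
    by_cases hj : j = i <;> simp [hj])
  simp only [qReTr, Matrix.mul_diagonal] at this
  rw [← sub_nonneg, ← Finset.sum_sub_distrib, Finset.sum_eq_single i] at this
  · simp at this
    linarith
  · intro j _ hj
    simp [hj]
  · simp

lemma isCompact_qUnitary (k : ℕ) :
    IsCompact {U : Matrix (Fin k) (Fin k) (Quaternion ℝ) | Uᴴ * U = 1} := by
  have hc : IsCompact (Set.pi Set.univ fun _ : Fin k => Set.pi Set.univ fun _ : Fin k =>
      Metric.closedBall (0 : Quaternion ℝ) 1) :=
    isCompact_univ_pi fun _ => isCompact_univ_pi fun _ => isCompact_closedBall _ _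
  refine hc.of_isClosed_subset ?_ ?_
  · exact isClosed_eq (by fun_prop) continuous_const
  · intro (U : Matrix (Fin k) (Fin k) (Quaternion ℝ)) hU i _ j _
    have h1 : ((Uᴴ * U) j j).re = 1 := by
      rw [show Uᴴ * U = 1 from hU]; simp
    rw [Matrix.mul_apply, q_re_sum] at h1
    simp only [Matrix.conjTranspose_apply, q_re_star_mul_self] at h1
    have h2 : ‖U i j‖ ^ 2 ≤ 1 := by
      rw [← h1]
      exact Finset.single_le_sum (f := fun i => ‖U i j‖ ^ 2) (fun _ _ => by positivity)
        (Finset.mem_univ i)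
    simp only [Metric.mem_closedBall, dist_zero_right]
    nlinarith [norm_nonneg (U i j)]

/-- Weights. -/
noncomputable def qC (m n : ℕ) : Matrix (Fin n) (Fin m) (Quaternion ℝ) :=
  Matrix.of fun i j => if (i : ℕ) = j then (((m + n : ℝ) - (i : ℕ) : ℝ) : Quaternion ℝ) else 0

lemma qC_mul {m n : ℕ} (A : Matrix (Fin m) (Fin n) (Quaternion ℝ)) (i j : Fin n) :
    (qC m n * A) i j = if h : (i : ℕ) < m then
      (((m + n : ℝ) - (i : ℕ) : ℝ) : Quaternion ℝ) * A ⟨i, h⟩ j else 0 := by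
  rw [Matrix.mul_apply]
  split_ifs with h
  · rw [Finset.sum_eq_single ⟨i, h⟩]
    · simp [qC]
    · intro k _ hk
      have : (i : ℕ) ≠ k := fun e => hk (Fin.ext e.symm)
      simp [qC, this]
    · simp
  · refine Finset.sum_eq_zero fun k _ => ?_
    have : (i : ℕ) ≠ k := fun e => h (e ▸ k.isLt)
    simp [qC, this]

lemma mul_qC {m n : ℕ} (A : Matrix (Fin m) (Fin n) (Quaternion ℝ)) (i j : Fin m) :
    (A * qC m n) i j = if h : (j : ℕ) < n then
      A i ⟨j, h⟩ * (((m + n : ℝ) - (j : ℕ) : ℝ) : Quaternion ℝ) else 0 := by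
  rw [Matrix.mul_apply]
  split_ifs with h
  · rw [Finset.sum_eq_single ⟨j, h⟩]
    · simp [qC]
    · intro k _ hk
      have : (k : ℕ) ≠ j := fun e => hk (Fin.ext e)
      simp [qC, this]
    · simp
  · refine Finset.sum_eq_zero fun k _ => ?_
    have : (k : ℕ) ≠ j := fun e => h (e ▸ k.isLt)
    simp [qC, this]

lemma offdiag_zero {m n : ℕ} (A : Matrix (Fin m) (Fin n) (Quaternion ℝ))
    (h1 : (qC m n * A)ᴴ = qC m n * A) (h2 : (A * qC m n)ᴴ = A * qC m n)
    (i : Fin m) (j : Fin n) (hij : (i : ℕ) ≠ j) : A i j = 0 := by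
  have hi : ((i : ℕ) : ℝ) < m := by exact_mod_cast i.isLt
  have hj : ((j : ℕ) : ℝ) < n := by exact_mod_cast j.isLt
  have hm : (0:ℝ) ≤ m := by positivity
  have hn : (0:ℝ) ≤ n := by positivity
  have ci : (0:ℝ) < (m + n : ℝ) - (i : ℕ) := by linarith
  have cj : (0:ℝ) < (m + n : ℝ) - (j : ℕ) := by linarith
  by_cases hin : (i : ℕ) < n
  · have e1 := congrFun (congrFun h1 ⟨i, hin⟩) j
    rw [Matrix.conjTranspose_apply, qC_mul, qC_mul] at e1
    simp only [i.isLt, dif_pos] at e1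
    by_cases hjm : (j : ℕ) < m
    · have e2 := congrFun (congrFun h2 i) ⟨j, hjm⟩
      rw [Matrix.conjTranspose_apply, mul_qC, mul_qC] at e2
      rw [dif_pos hjm] at e1
      rw [dif_pos hin, dif_pos j.isLt] at e2
      rw [Quaternion.coe_mul_eq_smul, Quaternion.coe_mul_eq_smul, Quaternion.star_smul] at e1
      rw [Quaternion.mul_coe_eq_smul, Quaternion.mul_coe_eq_smul, Quaternion.star_smul] at e2
      have e3 : (((m + n : ℝ) - (i : ℕ)) ^ 2 - ((m + n : ℝ) - (j : ℕ)) ^ 2) • A i j = 0 := by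
        rw [sub_smul, sq, sq, mul_smul, mul_smul]
        simp only [Fin.eta] at e1 e2
        rw [← e1, ← e2, smul_comm, sub_self]
      rcases smul_eq_zero.mp e3 with h | h
      · exfalso
        apply hij
        have : ((i : ℕ) : ℝ) = (j : ℕ) := by
          have : (((j:ℕ):ℝ) - (i:ℕ)) * (((m + n : ℝ) - (i : ℕ)) + ((m + n : ℝ) - (j : ℕ))) = 0 := by
            linear_combination h
          rcases mul_eq_zero.mp this with h | h <;> linarith
        exact_mod_cast this
      · exact h
    · simp only [hjm, dif_neg, not_false_eq_true, star_zero, Quaternion.coe_mul_eq_smul] at e1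
      exact (smul_eq_zero.mp e1.symm).resolve_left ci.ne'
  · have hjm : (j : ℕ) < m := by omega
    have e2 := congrFun (congrFun h2 i) ⟨j, hjm⟩
    rw [Matrix.conjTranspose_apply, mul_qC, mul_qC] at e2
    simp only [hin, j.isLt, dif_pos, dif_neg, not_false_eq_true, star_zero,
      Quaternion.mul_coe_eq_smul] at e2
    exact (smul_eq_zero.mp e2.symm).resolve_left cj.ne'

lemma qReTr_qC {m n : ℕ} (A : Matrix (Fin m) (Fin n) (Quaternion ℝ)) :
    qReTr (qC m n * A) = ∑ k : Fin (min m n), ((m + n : ℝ) - (k : ℕ)) *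
      (A (Fin.castLE (min_le_left _ _) k) (Fin.castLE (min_le_right _ _) k)).re := by
  rw [qReTr]
  symm
  refine Finset.sum_of_injOn (Fin.castLE (min_le_right m n)) ?_ ?_ ?_ ?_
  · exact (Fin.castLE_injective _).injOn
  · intro _ _; simp
  · intro i _ hi
    rw [qC_mul, dif_neg]
    · simp
    · intro h
      exact hi ⟨⟨i, lt_min h i.isLt⟩, by simp, by ext; simp⟩
  · intro k _
    have : (k : ℕ) < m := lt_of_lt_of_le k.isLt (min_le_left _ _)
    rw [qC_mul, dif_pos (by simpa using this), Quaternion.coe_mul_eq_smul]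
    simp
    left
    rfl

lemma exists_perm_lift {l m : ℕ} (h : l ≤ m) (i j : Fin l) (k : Fin l) :
    Equiv.swap (Fin.castLE h i) (Fin.castLE h j) (Fin.castLE h k) =
      Fin.castLE h (Equiv.swap i j k) := by
  have := (Fin.castLE_injective h).map_swap (x := i) (y := j) (z := k)
  exact this.symm

lemma unitary_submatrix {k : ℕ} {U : Matrix (Fin k) (Fin k) (Quaternion ℝ)} (hU : Uᴴ * U = 1)
    (e : Equiv.Perm (Fin k)) : (U.submatrix id e)ᴴ * U.submatrix id e = 1 := by
  have h := Matrix.submatrix_mul_equiv Uᴴ U e (Equiv.refl _) e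
  rw [Equiv.coe_refl] at h
  rw [Matrix.conjTranspose_submatrix, h, hU, Matrix.submatrix_one_equiv]

lemma exists_qmax (m n : ℕ) (Q : Matrix (Fin m) (Fin n) (Quaternion ℝ)) :
    ∃ (U : Matrix (Fin m) (Fin m) (Quaternion ℝ)) (V : Matrix (Fin n) (Fin n) (Quaternion ℝ)),
      Uᴴ * U = 1 ∧ Vᴴ * V = 1 ∧
      ∀ (U' : Matrix (Fin m) (Fin m) (Quaternion ℝ)) (V' : Matrix (Fin n) (Fin n) (Quaternion ℝ)),
      U'ᴴ * U' = 1 → V'ᴴ * V' = 1 →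
      qReTr (qC m n * (U'ᴴ * Q * V')) ≤ qReTr (qC m n * (Uᴴ * Q * V)) := by
  have hcont : Continuous fun p : Matrix (Fin m) (Fin m) (Quaternion ℝ) ×
      Matrix (Fin n) (Fin n) (Quaternion ℝ) => qReTr (qC m n * (p.1ᴴ * Q * p.2)) := by
    unfold qReTr
    refine continuous_finsetSum _ fun i _ => Quaternion.continuous_re.comp ?_
    have : Continuous fun p : Matrix (Fin m) (Fin m) (Quaternion ℝ) ×
      Matrix (Fin n) (Fin n) (Quaternion ℝ) => (qC m n * (p.1ᴴ * Q * p.2)) := by fun_prop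
    exact this.matrix_elem i i
  obtain ⟨⟨U, V⟩, ⟨hU, hV⟩, hmax⟩ := ((isCompact_qUnitary m).prod
    (isCompact_qUnitary n)).exists_isMaxOn ⟨(1, 1), by simp⟩ hcont.continuousOn
  exact ⟨U, V, hU, hV, fun U' V' h1 h2 => isMaxOn_iff.mp hmax (U', V') (Set.mk_mem_prod h1 h2)⟩

theorem quaternion_svd_exists (m n : ℕ) (Q : Matrix (Fin m) (Fin n) (Quaternion ℝ)) :
    ∃ (U : Matrix (Fin m) (Fin m) (Quaternion ℝ)) (V : Matrix (Fin n) (Fin n) (Quaternion ℝ))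
      (σ : Fin (min m n) → ℝ),
      Uᴴ * U = 1 ∧ Vᴴ * V = 1 ∧
      (∀ i j : Fin (min m n), i ≤ j → σ j ≤ σ i) ∧
      (∀ i, 0 ≤ σ i) ∧
      Q = U * (Matrix.of fun (i : Fin m) (j : Fin n) =>
          if h : (i : ℕ) = (j : ℕ) then
            ((σ ⟨(i : ℕ), lt_min_iff.mpr ⟨i.isLt, h ▸ j.isLt⟩⟩ : ℝ) : Quaternion ℝ)
          else 0) * Vᴴ := by
  obtain ⟨U, V, hU, hV, hmax'⟩ := exists_qmax m n Q
  obtain ⟨A, hA⟩ : ∃ A, A = Uᴴ * Q * V := ⟨_, rfl⟩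
  rw [← hA] at hmax'
  have hR : ∀ G : Matrix (Fin n) (Fin n) (Quaternion ℝ), Gᴴ * G = 1 →
      qReTr (qC m n * A * G) ≤ qReTr (qC m n * A) := by
    intro G hG
    have := hmax' U (V * G) hU (by
      rw [Matrix.conjTranspose_mul, Matrix.mul_assoc, ← Matrix.mul_assoc Vᴴ, hV, Matrix.one_mul, hG])
    simpa only [hA, Matrix.mul_assoc] using this
  have hL : ∀ G : Matrix (Fin m) (Fin m) (Quaternion ℝ), Gᴴ * G = 1 →
      qReTr (A * qC m n * G) ≤ qReTr (A * qC m n) := by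
    intro G hG
    have hG' : G * Gᴴ = 1 := mul_eq_one_comm.mp hG
    have := hmax' (U * Gᴴ) V (by
      rw [Matrix.conjTranspose_mul, Matrix.mul_assoc, ← Matrix.mul_assoc Uᴴ, hU, Matrix.one_mul,
        Matrix.conjTranspose_conjTranspose, hG']) hV
    rw [qReTr_mul_comm A, qReTr_mul_comm _ G, ← Matrix.mul_assoc, qReTr_mul_comm _ (qC m n)]
    simpa only [hA, Matrix.mul_assoc, Matrix.conjTranspose_mul,
      Matrix.conjTranspose_conjTranspose] using this
  have hH1 := hermitian_of_max _ hR
  have hH2 := hermitian_of_max _ hL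
  have hpos : ∀ k : Fin (min m n), (0:ℝ) < (m + n : ℝ) - (k : ℕ) := by
    intro k
    have h1 : (k : ℕ) < m := lt_of_lt_of_le k.isLt (min_le_left _ _)
    have h2 : ((k : ℕ) : ℝ) < m := by exact_mod_cast h1
    have hn : (0:ℝ) ≤ n := by positivity
    linarith
  let a : Fin (min m n) → Quaternion ℝ := fun k =>
    A (Fin.castLE (min_le_left _ _) k) (Fin.castLE (min_le_right _ _) k)
  have hdiag : ∀ k : Fin (min m n),
      (qC m n * A) (Fin.castLE (min_le_right _ _) k) (Fin.castLE (min_le_right _ _) k) =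
      ((m + n : ℝ) - (k : ℕ)) • a k := by
    intro k
    have h1 : (k : ℕ) < m := lt_of_lt_of_le k.isLt (min_le_left _ _)
    rw [qC_mul, dif_pos (by simpa using h1), Quaternion.coe_mul_eq_smul]
    rfl
  refine ⟨U, V, fun k => (a k).re, hU, hV, ?_, ?_, ?_⟩
  · intro i j hij
    rcases hij.eq_or_lt with rfl | hlt
    · exact le_rfl
    have h := hmax' _ _
      (unitary_submatrix hU (Equiv.swap (Fin.castLE (min_le_left m n) i) (Fin.castLE (min_le_left m n) j)))
      (unitary_submatrix hV (Equiv.swap (Fin.castLE (min_le_right m n) i) (Fin.castLE (min_le_right m n) j)))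
    have hs : ∀ (e : Equiv.Perm (Fin m)) (f : Equiv.Perm (Fin n)),
        (U.submatrix id e)ᴴ * Q * V.submatrix id f = A.submatrix e f := by
      intro e f
      ext1 x y
      simp [hA, Matrix.mul_apply, Matrix.submatrix_apply]
    rw [hs, qReTr_qC, qReTr_qC, ← sub_nonneg, ← Finset.sum_sub_distrib,
      Finset.sum_eq_add i j hlt.ne] at h
    · simp only [Matrix.submatrix_apply, exists_perm_lift, Equiv.swap_apply_left,
        Equiv.swap_apply_right] at h
      have hlt' : ((i : ℕ) : ℝ) < (j : ℕ) := by exact_mod_cast hlt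
      change (a j).re ≤ (a i).re
      change 0 ≤ ((m + n : ℝ) - (i : ℕ)) * (a i).re - ((m + n : ℝ) - (i : ℕ)) * (a j).re +
        (((m + n : ℝ) - (j : ℕ)) * (a j).re - ((m + n : ℝ) - (j : ℕ)) * (a i).re) at h
      by_contra hc
      nlinarith
    · intro k _ hk
      simp only [Matrix.submatrix_apply, exists_perm_lift,
        Equiv.swap_apply_of_ne_of_ne hk.1 hk.2, sub_self]
    · simp
    · simp
  · intro k
    have := diag_nonneg_of_max _ hR (Fin.castLE (min_le_right _ _) k)
    rw [hdiag, Quaternion.re_smul, smul_eq_mul] at this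
    exact nonneg_of_mul_nonneg_right this (hpos k)
  · have hU' : U * Uᴴ = 1 := mul_eq_one_comm.mp hU
    have hV' : V * Vᴴ = 1 := mul_eq_one_comm.mp hV
    have hQ : Q = U * A * Vᴴ := by
      rw [hA]
      calc Q = (U * Uᴴ) * Q * (V * Vᴴ) := by rw [hU', hV']; simp
        _ = _ := by simp only [Matrix.mul_assoc]
    conv_lhs => rw [hQ]
    congr 2
    ext1 i j
    rw [Matrix.of_apply]
    split_ifs with h
    · have hk : (i : ℕ) < min m n := lt_min_iff.mpr ⟨i.isLt, h ▸ j.isLt⟩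
      have e : A i j = a ⟨i, hk⟩ := by
        change A i j = A _ _
        congr 1
        exact Fin.ext h.symm
      rw [e]
      have e1 := congrFun (congrFun hH1 (Fin.castLE (min_le_right _ _) ⟨i, hk⟩))
        (Fin.castLE (min_le_right _ _) ⟨i, hk⟩)
      rw [Matrix.conjTranspose_apply, hdiag, Quaternion.star_smul] at e1
      have e2 := smul_right_injective _ (hpos ⟨i, hk⟩).ne' e1
      exact Quaternion.star_eq_self.mp e2
    · exact offdiag_zero A hH1 hH2 i j h
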